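/- The binary hierarchical model semigroup of the complete graph K₄ (simplicial complex [12][13][14][23][24][34], all dᵢ = 2) has exactly one hole: the vector 𝟏 whose every pair-marginal coordinate equals 1 lies in the normalization ℤℬ ∩ ℝ≥0ℬ of ℕℬ_{K₄,(2,2,2,2)} but not in ℕℬ_{K₄,(2,2,2,2)}, and every other element of the normalization lies in the semigroup. -/

import Mathlib

namespace Stmt19

/-- Row index of the binary `K₄` design matrix: an edge `{a,b}`, `a < b`, of the
complete graph on four vertices together with a pair of binary states. -/
abbrev K4Row := {e : Fin 4 × Fin 4 // e.1 < e.2} × Fin 2 × Fin 2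

/-- The 24×16 design matrix of the binary hierarchical model on `K₄`: the column
indexed by `x : Fin 4 → Fin 2` is the direct sum of the unit vectors `e_{x_a x_b}`
over the six edges of `K₄`. -/
def K4Mat : Matrix K4Row (Fin 4 → Fin 2) ℤ :=
  Matrix.of fun k x =>
    if x k.1.1.1 = k.2.1 ∧ x k.1.1.2 = k.2.2 then 1 else 0

/-- The affine semigroup `ℕℬ_{K₄,(2,2,2,2)}`. -/
def Nspan : Set (K4Row → ℤ) :=
  {y | ∃ w : (Fin 4 → Fin 2) → ℤ, 0 ≤ w ∧ y = K4Mat.mulVec w}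

/-- The lattice `ℤℬ_{K₄,(2,2,2,2)}`. -/
def Zspan : Set (K4Row → ℤ) :=
  {y | ∃ w : (Fin 4 → Fin 2) → ℤ, y = K4Mat.mulVec w}

/-- Membership in the cone `ℝ≥0 ℬ_{K₄,(2,2,2,2)}` (rational coefficients suffice
for integer points of a rational cone). -/
def inCone (y : K4Row → ℤ) : Prop :=
  ∃ a : (Fin 4 → Fin 2) → ℚ, (∀ x, 0 ≤ a x) ∧
    ∀ k, (y k : ℚ) = ∑ x : Fin 4 → Fin 2, a x * (K4Mat k x : ℚ)

/-!
The kernel of `ℬ` consists of the functions `σ · ℓ` on the cube, where `σ` is the parity sign and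
`ℓ` is affine. Hence a nonnegative rational preimage of a point `y` of the normalization can be
written `w + σ · ℓ` with `w` integral, and if its support is minimal, it vanishes on a set of
vertices that spans affinely. There `ℓ` takes integral values, so by Cramer's rule and Hadamard's
bound `ℓ` has a common denominator `D ≤ 3`.

Round `w + σ · ℓ` down to an integral vector. The vertices where `D` divides `D ℓ` span affinely,
which leaves few residues of `D ℓ` other than `0`. For `D = 2` the fractional part is then mapped
to `𝟏`; for `D = 3` the form `D ℓ` is congruent to `±` the Hamming distance to a vertex, and the
fractional part is mapped to `𝟏` or to a sum of columns. So `y` lies in `ℕℬ` or in `𝟏 + ℕℬ`, and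
as `𝟏` plus any column lies in `ℕℬ`, only `y = 𝟏` can be a hole. It is one: there is a weight on the
rows that pairs to `12` with `𝟏`, to `18` with a chosen column and nonnegatively with every column,
so no column fits into `𝟏`.
-/

open Matrix Function

section ConeReduction

variable {ι 𝕜 : Type*} [Finite ι] [Field 𝕜] [LinearOrder 𝕜] [IsStrictOrderedRing 𝕜]

lemma exists_nonneg_add_smul_support_ssubset_of_neg {a u : ι → 𝕜} (ha : 0 ≤ a)
    (hsupp : support u ⊆ support a) {i₀ : ι} (hi₀ : u i₀ < 0) :
    ∃ t : 𝕜, 0 ≤ a + t • u ∧ support (a + t • u) ⊂ support a := by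
  cases nonempty_fintype ι
  obtain ⟨i, hi, hmin⟩ := Finset.exists_min_image {i | u i < 0} (fun i => a i / -u i)
    ⟨i₀, by simpa using hi₀⟩
  have hui : u i < 0 := by simpa using hi
  have hvanish : a i + a i / -u i * u i = 0 := by field_simp [hui.ne]; ring
  refine ⟨a i / -u i, fun j => ?_, ?_⟩
  · change 0 ≤ a j + a i / -u i * u j
    rcases lt_or_ge (u j) 0 with huj | huj
    · have hij := hmin j (by simpa using huj)
      rw [le_div_iff₀ (neg_pos.mpr huj)] at hij
      linarith
    · exact add_nonneg (ha j) (mul_nonneg (div_nonneg (ha i) (neg_nonneg.mpr hui.le)) huj)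
  · refine (Set.ssubset_iff_of_subset fun j => mt fun haj => ?_).mpr ⟨i, hsupp hui.ne, ?_⟩
    · have huj : u j = 0 := notMem_support.mp fun h => hsupp h haj
      simp [haj, huj]
    · exact notMem_support.mpr hvanish

lemma exists_nonneg_add_smul_support_ssubset {a u : ι → 𝕜} (ha : 0 ≤ a) (hu : u ≠ 0)
    (hsupp : support u ⊆ support a) :
    ∃ t : 𝕜, 0 ≤ a + t • u ∧ support (a + t • u) ⊂ support a := by
  obtain ⟨i, hi⟩ := ne_iff.mp hu
  rcases lt_or_gt_of_ne hi with hneg | hpos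
  · exact exists_nonneg_add_smul_support_ssubset_of_neg ha hsupp hneg
  · obtain ⟨t, ht⟩ := exists_nonneg_add_smul_support_ssubset_of_neg (u := -u) (i₀ := i) ha
      (by rwa [support_neg]) (neg_lt_zero.mpr hpos)
    exact ⟨-t, by rwa [neg_smul, ← smul_neg]⟩

lemma exists_nonneg_minimal_support (K : Submodule 𝕜 (ι → 𝕜)) {a : ι → 𝕜} (ha : 0 ≤ a) :
    ∃ b, 0 ≤ b ∧ b - a ∈ K ∧ ∀ u ∈ K, support u ⊆ support b → u = 0 := by
  obtain ⟨b, ⟨hb, hba⟩, hmin⟩ := (measure fun b : ι → 𝕜 => (support b).ncard).wf.has_min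
    {b | 0 ≤ b ∧ b - a ∈ K} ⟨a, ha, by simp⟩
  refine ⟨b, hb, hba, fun u hu hsupp => by_contra fun hne => ?_⟩
  obtain ⟨t, hnonneg, hlt⟩ := exists_nonneg_add_smul_support_ssubset hb hne hsupp
  refine hmin (b + t • u) ⟨hnonneg, ?_⟩ (Set.ncard_lt_ncard hlt)
  rw [add_sub_right_comm]
  exact K.add_mem hba (K.smul_mem t hu)

end ConeReduction

section Determinants

variable {n : ℕ}

lemma abs_det_le_prod_norm_row (A : Matrix (Fin n) (Fin n) ℝ) :
    |A.det| ≤ ∏ i, ‖WithLp.toLp 2 (A i)‖ := by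
  let b := EuclideanSpace.basisFun (Fin n) ℝ
  have : Fact (Module.finrank ℝ (EuclideanSpace ℝ (Fin n)) = n) := ⟨by simp⟩
  let o := b.toBasis.orientation
  have hdet : b.toBasis.det (fun i => WithLp.toLp 2 (A i)) = A.det := by
    rw [Module.Basis.det_apply, ← det_transpose]
    rfl
  rw [← hdet, ← o.volumeForm_robust' b]
  exact o.abs_volumeForm_apply_le _

lemma sq_det_le_of_forall_sq_le_one {A : Matrix (Fin n) (Fin n) ℝ} (hA : ∀ i j, A i j ^ 2 ≤ 1) :
    A.det ^ 2 ≤ (n : ℝ) ^ n := by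
  calc A.det ^ 2 ≤ (∏ i, ‖WithLp.toLp 2 (A i)‖) ^ 2 :=
        sq_le_sq' (neg_le_of_abs_le (abs_det_le_prod_norm_row A))
          ((le_abs_self _).trans (abs_det_le_prod_norm_row A))
    _ = ∏ i, ∑ j, A i j ^ 2 := by
        simp [← Finset.prod_pow, EuclideanSpace.norm_sq_eq]
    _ ≤ ∏ _i : Fin n, (n : ℝ) := by
        gcongr with i
        simpa using Finset.sum_le_card_nsmul Finset.univ (fun j => A i j ^ 2) 1 fun j _ => hA i j
    _ = (n : ℝ) ^ n := by simp

lemma exists_rows_det_ne_zero {S : Set (Fin n → ℤ)}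
    (hS : ∀ h : Fin n → ℚ, (∀ v ∈ S, ∑ j, (v j : ℚ) * h j = 0) → h = 0) :
    ∃ A : Matrix (Fin n) (Fin n) ℤ, (∀ i, A i ∈ S) ∧ A.det ≠ 0 := by
  let toRat : (Fin n → ℤ) → Fin n → ℚ := fun v j => v j
  have hspan : Submodule.span ℚ (toRat '' S) = ⊤ := by
    by_contra hne
    obtain ⟨φ, hφ, hker⟩ := Submodule.exists_le_ker_of_lt_top _ (lt_top_iff_ne_top.mpr hne)
    refine hφ (LinearMap.pi_ext' fun j => LinearMap.ext_ring ?_)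
    refine congrFun (hS (fun j => φ (Pi.single j 1)) fun v hv => ?_) j
    have hφv : φ (toRat v) = 0 := hker (Submodule.subset_span ⟨v, hv, rfl⟩)
    rw [pi_eq_sum_univ' (toRat v), map_sum] at hφv
    simpa [toRat] using hφv
  have hbasis := Submodule.exists_fun_fin_finrank_span_eq ℚ (toRat '' S)
  rw [hspan, finrank_top, Module.finrank_fin_fun] at hbasis
  obtain ⟨f, hfS, -, hindep⟩ := hbasis
  choose v hvS hvf using hfS
  refine ⟨of v, hvS, fun hdet => ?_⟩
  have hmap : (Int.castRingHom ℚ).mapMatrix (of v) = of f := congrArg of (funext hvf)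
  have hunit : IsUnit ((Int.castRingHom ℚ).mapMatrix (of v)) := by
    rw [hmap, ← linearIndependent_rows_iff_isUnit]
    exact hindep
  rw [isUnit_iff_isUnit_det, ← RingHom.map_det, hdet, map_zero] at hunit
  exact not_isUnit_zero hunit

lemma det_mul_eq_adjugate_mulVec {m : Type*} [Fintype m] [DecidableEq m]
    {A : Matrix m m ℤ} {c : m → ℚ} {z : m → ℤ} (h : ∀ i, ∑ j, (A i j : ℚ) * c j = z i) (j : m) :
    (A.det : ℚ) * c j = (A.adjugate *ᵥ z) j := by
  have hAc : (Int.castRingHom ℚ).mapMatrix A *ᵥ c = Int.castRingHom ℚ ∘ z := funext h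
  calc (A.det : ℚ) * c j = (((Int.castRingHom ℚ).mapMatrix A).det • c) j := by
        rw [← RingHom.map_det]; rfl
    _ = (((Int.castRingHom ℚ).mapMatrix A).adjugate *ᵥ (Int.castRingHom ℚ ∘ z)) j := by
        rw [← hAc, mulVec_mulVec, adjugate_mul, smul_mulVec, one_mulVec]
    _ = (A.adjugate *ᵥ z) j := by
        rw [← RingHom.map_adjugate]
        exact (RingHom.map_mulVec (Int.castRingHom ℚ) _ _ j).symm

end Determinants

section CubeForms

variable {n : ℕ}

/-- The homogenized cube vertex `(1, x₁, …, xₙ)`. -/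
def homogenize (x : Fin n → Fin 2) : Fin (n + 1) → ℤ :=
  Fin.cons 1 fun i => ((x i : ℕ) : ℤ)

/-- The value at `x` of the affine function `c₀ + c₁ x₁ + ⋯ + cₙ xₙ` on the cube. -/
def affineForm {R : Type*} [Ring R] (c : Fin (n + 1) → R) (x : Fin n → Fin 2) : R :=
  (fun j => (homogenize x j : R)) ⬝ᵥ c

/-- The vertices in `Z` affinely span `ℚⁿ`, phrased dually: only the zero affine function
vanishes on `Z`. -/
def AffinelySpans (Z : Set (Fin n → Fin 2)) : Prop :=
  ∀ h : Fin (n + 1) → ℚ, (∀ x ∈ Z, affineForm h x = 0) → h = 0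

lemma AffinelySpans.mono {Z Z' : Set (Fin n → Fin 2)} (hZ : AffinelySpans Z) (hZZ' : Z ⊆ Z') :
    AffinelySpans Z' :=
  fun h hh => hZ h fun x hx => hh x (hZZ' hx)

lemma affineForm_sub {R : Type*} [Ring R] (c c' : Fin (n + 1) → R) (x : Fin n → Fin 2) :
    affineForm (c - c') x = affineForm c x - affineForm c' x :=
  dotProduct_sub _ _ _

lemma affineForm_single {R : Type*} [Ring R] (j : Fin (n + 1)) (r : R) (x : Fin n → Fin 2) :
    affineForm (Pi.single j r) x = homogenize x j * r :=
  dotProduct_single _ _ _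

lemma affineForm_intCast {R : Type*} [Ring R] (c : Fin (n + 1) → ℤ) (x : Fin n → Fin 2) :
    affineForm (fun j => (c j : R)) x = (affineForm c x : ℤ) := by
  simp [affineForm, dotProduct]

lemma affineForm_modEq {D : ℤ} {c c' : Fin (n + 1) → ℤ} (h : ∀ j, c j ≡ c' j [ZMOD D])
    (x : Fin n → Fin 2) : affineForm c x ≡ affineForm c' x [ZMOD D] := by
  simpa only [affineForm, dotProduct, Int.cast_id] using
    Int.ModEq.sum (s := Finset.univ) fun j _ => (h j).mul_left (homogenize x j)

lemma AffinelySpans.eq_zero_of_int {Z : Set (Fin n → Fin 2)} (hZ : AffinelySpans Z)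
    {h : Fin (n + 1) → ℤ} (hh : ∀ x ∈ Z, affineForm h x = 0) : h = 0 := by
  have hcast := hZ (fun j => (h j : ℚ)) fun x hx => by
    rw [affineForm_intCast, hh x hx, Int.cast_zero]
  exact funext fun j => by simpa using congrFun hcast j

lemma affinelySpans_univ : AffinelySpans (Set.univ : Set (Fin n → Fin 2)) := by
  intro h hh
  have hzero : h 0 = 0 := by
    simpa [affineForm, dotProduct, homogenize, Fin.sum_univ_succ] using hh 0 trivial
  refine funext (Fin.cases hzero fun i => ?_)
  simpa [affineForm, dotProduct, homogenize, Fin.sum_univ_succ, Pi.single_apply, hzero,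
    apply_ite] using hh (Pi.single i 1) trivial

lemma four_pow_mul_sq_det_homogenize_le (x : Fin (n + 1) → Fin n → Fin 2) :
    4 ^ n * (of fun i => homogenize (x i)).det ^ 2 ≤ ((n : ℤ) + 1) ^ (n + 1) := by
  -- Right multiplication by `T` turns the rows `(1, x)` into the sign vectors `(1, 1 - 2x)`.
  let T : Matrix (Fin (n + 1)) (Fin (n + 1)) ℤ :=
    of fun i j => if i = 0 then 1 else if i = j then -2 else 0
  have hT : T.det = (-2) ^ n := by
    rw [det_of_isUpperTriangular]
    · simp [T, Fin.prod_univ_succ]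
    · intro i j (hij : j < i)
      simp [T, hij.ne', (Fin.zero_le j).trans_lt hij |>.ne']
  let A := (of fun i => homogenize (x i)) * T
  have hA : ∀ i j, A i j ^ 2 = 1 := by
    intro i j
    have hsq : ∀ b : Fin 2, (1 - 2 * ((b : ℕ) : ℤ)) ^ 2 = 1 := by decide
    refine Fin.cases ?_ (fun j => ?_) j
    · simp [A, T, mul_apply, homogenize, Fin.sum_univ_succ]
    · have hentry : A i j.succ = 1 - 2 * ((x i j : ℕ) : ℤ) := by
        simp [A, T, mul_apply, homogenize, Fin.sum_univ_succ, sub_eq_add_neg, mul_comm]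
      rw [hentry, hsq]
  have hdet : A.det ^ 2 = 4 ^ n * (of fun i => homogenize (x i)).det ^ 2 := by
    rw [det_mul, hT, mul_pow, ← pow_mul, mul_comm n, pow_mul, mul_comm]
    norm_num
  have hbound := sq_det_le_of_forall_sq_le_one (A := (Int.castRingHom ℝ).mapMatrix A)
    fun i j => by
      rw [RingHom.mapMatrix_apply, map_apply, ← map_pow, hA, map_one]
  rw [← RingHom.map_det, ← map_pow, hdet, eq_intCast] at hbound
  exact_mod_cast hbound

lemma exists_common_denominator {Z : Set (Fin n → Fin 2)} (hZ : AffinelySpans Z)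
    {c : Fin (n + 1) → ℚ} (hc : ∀ x ∈ Z, ∃ z : ℤ, affineForm c x = z) :
    ∃ D : ℤ, 0 < D ∧ 4 ^ n * D ^ 2 ≤ ((n : ℤ) + 1) ^ (n + 1) ∧
      ∃ m : Fin (n + 1) → ℤ, ∀ j, (D : ℚ) * c j = m j := by
  obtain ⟨A, hAZ, hA⟩ := exists_rows_det_ne_zero (S := homogenize '' Z) fun h hh =>
    hZ h fun x hx => hh _ ⟨x, hx, rfl⟩
  choose x hxZ hxA using hAZ
  choose z hz using fun i => hc (x i) (hxZ i)
  have hcramer := det_mul_eq_adjugate_mulVec (A := A) (c := c) (z := z) fun i => by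
    rw [← hz i, ← hxA i]
    rfl
  refine ⟨|A.det|, abs_pos.mpr hA, ?_, fun j => A.det.sign * (A.adjugate *ᵥ z) j, fun j => ?_⟩
  · rw [sq_abs, ← show (of fun i => homogenize (x i)) = A from funext hxA]
    exact four_pow_mul_sq_det_homogenize_le x
  · rw [← Int.sign_mul_self_eq_abs, Int.cast_mul, mul_assoc, hcramer, Int.cast_mul]

/-- The sign `(-1) ^ (x₁ + ⋯ + xₙ)` of a cube vertex. -/
def parity (x : Fin n → Fin 2) : ℤ := (-1) ^ ∑ i, (x i : ℕ)

lemma parity_mul_self (x : Fin n → Fin 2) : parity x * parity x = 1 := by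
  rw [parity, ← mul_pow, neg_one_mul, neg_neg, one_pow]

lemma parity_ne_zero (x : Fin n → Fin 2) : parity x ≠ 0 :=
  pow_ne_zero _ (by norm_num)

lemma parity_mul_parity (x z : Fin n → Fin 2) : parity x * parity z = (-1) ^ hammingDist x z := by
  have hbit : ∀ b b' : Fin 2, (-1 : ℤ) ^ (b : ℕ) * (-1) ^ (b' : ℕ) = if b ≠ b' then -1 else 1 := by
    decide
  simp only [parity, ← Finset.prod_pow_eq_pow_sum, ← Finset.prod_mul_distrib, hbit,
    Finset.prod_ite, Finset.prod_const, one_pow, mul_one, hammingDist]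

/-- The coefficients of the affine function `x ↦ n + 1 - 2 d(x, z)`, `d` the Hamming distance. -/
def centeredDist (z : Fin n → Fin 2) : Fin (n + 1) → ℤ :=
  Fin.cons (n + 1 - 2 * ∑ i, ((z i : ℕ) : ℤ)) fun i => 4 * ((z i : ℕ) : ℤ) - 2

lemma affineForm_centeredDist (x z : Fin n → Fin 2) :
    affineForm (centeredDist z) x = n + 1 - 2 * hammingDist x z := by
  have hbit : ∀ b b' : Fin 2, (if b ≠ b' then 1 else 0 : ℤ) =
      (b' : ℕ) - (b : ℕ) * (2 * (b' : ℕ) - 1) := by decide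
  have hdist : (hammingDist x z : ℤ) =
      ∑ i, (((z i : ℕ) : ℤ) - (x i : ℕ) * (2 * (z i : ℕ) - 1)) := by
    simp only [hammingDist, Finset.card_filter, Nat.cast_sum, Nat.cast_ite, Nat.cast_one,
      Nat.cast_zero, hbit]
  have hform : affineForm (centeredDist z) x =
      n + 1 - 2 * ∑ i, ((z i : ℕ) : ℤ) + ∑ i, ((x i : ℕ) : ℤ) * (4 * (z i : ℕ) - 2) := by
    simp [affineForm, dotProduct, Fin.sum_univ_succ, homogenize, centeredDist]
  have hdouble : ∑ i, ((x i : ℕ) : ℤ) * (4 * (z i : ℕ) - 2) =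
      2 * ∑ i, ((x i : ℕ) : ℤ) * (2 * (z i : ℕ) - 1) := by
    rw [Finset.mul_sum]
    exact Finset.sum_congr rfl fun i _ => by ring
  rw [hform, hdist, hdouble, Finset.sum_sub_distrib]
  ring

/-- The vertices where the affine function with coefficients `ε` is divisible by `D` all lie on a
level set of this function, on `xᵢ = xⱼ` or on `xᵢ + xⱼ = 1`. For `ε ≠ 0` these are hyperplanes;
the list is finite so that the condition is decidable. -/
def LiesInHyperplaneMod (D : ℤ) (ε : Fin (n + 1) → SignType) : Prop :=
  (∃ t : SignType, ∀ x, D ∣ affineForm (fun j => (ε j : ℤ)) x →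
      affineForm (fun j => (ε j : ℤ)) x = D * t) ∨
    ∃ i j : Fin n, i < j ∧ ((∀ x, D ∣ affineForm (fun j => (ε j : ℤ)) x → x i = x j) ∨
      ∀ x, D ∣ affineForm (fun j => (ε j : ℤ)) x → x i ≠ x j)

instance (D : ℤ) (ε : Fin (n + 1) → SignType) : Decidable (LiesInHyperplaneMod D ε) :=
  inferInstanceAs (Decidable (_ ∨ _))

lemma LiesInHyperplaneMod.not_affinelySpans {D : ℤ} (hD : 2 ≤ D) {ε : Fin (n + 1) → SignType}
    (hε : ε ≠ 0) (h : LiesInHyperplaneMod D ε) :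
    ¬ AffinelySpans {x | D ∣ affineForm (fun j => (ε j : ℤ)) x} := by
  intro hspan
  rcases h with ⟨t, ht⟩ | ⟨i, j, hij, heq | hne⟩
  · have hzero := hspan.eq_zero_of_int (h := (fun j => (ε j : ℤ)) - Pi.single 0 (D * t))
      fun x hx => by
        rw [affineForm_sub, ht x hx, affineForm_single]
        simp [homogenize]
    rw [sub_eq_zero] at hzero
    have hcast : ∀ σ : SignType, (σ : ℤ) = 0 → σ = 0 := by decide
    refine hε (funext (Fin.cases ?_ fun j => ?_))
    · have hε₀ : ((ε 0 : SignType) : ℤ) = D * t := by simpa using congrFun hzero 0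
      generalize ε 0 = ε₀ at hε₀ ⊢
      cases t <;> cases ε₀ <;> simp at hε₀ ⊢ <;> omega
    · exact hcast _ (by simpa using congrFun hzero j.succ)
  · have hzero := hspan.eq_zero_of_int (h := Pi.single i.succ 1 - Pi.single j.succ 1)
      fun x hx => by
        simp [affineForm_sub, affineForm_single, homogenize, heq x hx]
    simpa [hij.ne] using congrFun hzero i.succ
  · have hzero := hspan.eq_zero_of_int
      (h := Pi.single i.succ 1 - (Pi.single 0 1 - Pi.single j.succ 1)) fun x hx => by
        have hsum : ∀ b b' : Fin 2, b ≠ b' → ((b : ℕ) : ℤ) - (1 - ((b' : ℕ) : ℤ)) = 0 := by decide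
        simpa [affineForm_sub, affineForm_single, homogenize] using hsum _ _ (hne x hx)
    simpa [hij.ne] using congrFun hzero i.succ

end CubeForms

/-- Weight on the rows of `K4Mat` that counts a row with weight `p`, `q` or `r` according to
whether its pair of states agrees with `s` in two, one or no places. -/
def agreementWeight (p q r : ℤ) (s : Fin 4 → Fin 2) (k : K4Row) : ℤ :=
  if s k.1.1.1 = k.2.1 then if s k.1.1.2 = k.2.2 then p else q
  else if s k.1.1.2 = k.2.2 then q else r

lemma agreementWeight_vecMul (p q r : ℤ) (s x : Fin 4 → Fin 2) :
    (agreementWeight p q r s ᵥ* K4Mat) x = p * (4 - hammingDist x s).choose 2 +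
      q * (hammingDist x s * (4 - hammingDist x s) : ℕ) + r * (hammingDist x s).choose 2 := by
  have hp : ∀ s x, (agreementWeight 1 0 0 s ᵥ* K4Mat) x = (4 - hammingDist x s).choose 2 := by
    decide +kernel
  have hq : ∀ s x, (agreementWeight 0 1 0 s ᵥ* K4Mat) x =
      (hammingDist x s * (4 - hammingDist x s) : ℕ) := by
    decide +kernel
  have hr : ∀ s x, (agreementWeight 0 0 1 s ᵥ* K4Mat) x = (hammingDist x s).choose 2 := by
    decide +kernel
  have hsplit : agreementWeight p q r s = p • agreementWeight 1 0 0 s +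
      q • agreementWeight 0 1 0 s + r • agreementWeight 0 0 1 s := by
    funext k
    simp only [agreementWeight, Pi.add_apply, Pi.smul_apply]
    split_ifs <;> simp
  rw [hsplit, add_vecMul, add_vecMul, smul_vecMul, smul_vecMul, smul_vecMul, ← hp, ← hq, ← hr]
  rfl

lemma agreementWeight_vecMul_quadratic (s x : Fin 4 → Fin 2) :
    (agreementWeight 3 (-1) 1 s ᵥ* K4Mat) x =
      3 * (((hammingDist x s : ℤ) - 2) * ((hammingDist x s : ℤ) - 3)) := by
  have hd : hammingDist x s ≤ 4 := hammingDist_le_card_fintype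
  rw [agreementWeight_vecMul]
  interval_cases hammingDist x s <;> decide

-- This is row `s` of `96` times the orthogonal projection onto the row space of `K4Mat`.
lemma agreementWeight_vecMul_projection (s x : Fin 4 → Fin 2) :
    (agreementWeight 11 (-5) 3 s ᵥ* K4Mat) x =
      6 * ((if x = s then 16 else 0) - parity x * parity s * (5 - 2 * hammingDist x s)) := by
  have hd : hammingDist x s ≤ 4 := hammingDist_le_card_fintype
  simp only [agreementWeight_vecMul, parity_mul_parity, ← hammingDist_eq_zero (x := x)]
  interval_cases hammingDist x s <;> decide

lemma mulVec_parity_mul_homogenize (j : Fin 5) :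
    K4Mat *ᵥ (fun x => parity x * homogenize x j) = 0 := by
  revert j
  decide +kernel

lemma mulVec_parity_mul_affineForm {R : Type*} [CommRing R] (c : Fin 5 → R) :
    K4Mat.map (Int.cast : ℤ → R) *ᵥ (fun x => (parity x : R) * affineForm c x) = 0 := by
  funext k
  calc _ = ∑ j, (∑ x, K4Mat k x * (parity x * homogenize x j) : ℤ) * c j := by
        simp only [mulVec, dotProduct, map_apply, affineForm, Finset.mul_sum, Finset.sum_mul,
          Int.cast_sum, Int.cast_mul]
        rw [Finset.sum_comm]
        simp only [mul_assoc]
    _ = 0 := Finset.sum_eq_zero fun j _ => by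
        rw [show ∑ x, K4Mat k x * (parity x * homogenize x j) = 0 from
          congrFun (mulVec_parity_mul_homogenize j) k, Int.cast_zero, zero_mul]

lemma exists_affineForm_of_mulVec_eq_zero {u : (Fin 4 → Fin 2) → ℚ}
    (hu : K4Mat.map (Int.cast : ℤ → ℚ) *ᵥ u = 0) :
    ∃ c : Fin 5 → ℚ, ∀ x, u x = parity x * affineForm c x := by
  refine ⟨fun j => ∑ z, (parity z * u z / 16) * centeredDist z j, fun s => ?_⟩
  have hproj : ∑ x, ((6 * ((if x = s then 16 else 0) -
      parity x * parity s * (5 - 2 * hammingDist x s)) : ℤ) : ℚ) * u x = 0 := by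
    calc _ = ((Int.cast ∘ agreementWeight 11 (-5) 3 s) ᵥ* K4Mat.map (Int.cast : ℤ → ℚ)) ⬝ᵥ u :=
          Finset.sum_congr rfl fun x _ => by
            rw [← agreementWeight_vecMul_projection]
            exact congrArg (· * u x) (RingHom.map_vecMul (Int.castRingHom ℚ) _ _ x)
      _ = 0 := by rw [← dotProduct_mulVec, hu, dotProduct_zero]
  have hform : affineForm (fun j => ∑ z, (parity z * u z / 16) * (centeredDist z j : ℚ)) s =
      ∑ z, (parity z * u z / 16) * (5 - 2 * hammingDist z s) := by
    calc _ = ∑ z, (parity z * u z / 16) * affineForm (fun j => (centeredDist z j : ℚ)) s := by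
          simp only [affineForm, dotProduct, Finset.mul_sum, mul_left_comm]
          exact Finset.sum_comm
      _ = _ := by
          simp only [affineForm_intCast, affineForm_centeredDist, hammingDist_comm s]
          norm_num
  have hsplit : ∑ x, ((6 * ((if x = s then 16 else 0) -
      parity x * parity s * (5 - 2 * hammingDist x s)) : ℤ) : ℚ) * u x =
      96 * (u s - parity s * ∑ z, (parity z * u z / 16) * (5 - 2 * hammingDist z s)) := by
    have hdelta : u s = ∑ x, if x = s then u x else 0 := by simp
    rw [hdelta, Finset.mul_sum, ← Finset.sum_sub_distrib, Finset.mul_sum]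
    refine Finset.sum_congr rfl fun x _ => ?_
    split_ifs <;> push_cast <;> ring
  rw [hform]
  linarith

lemma exists_nonneg_affinelySpans_zeros {a : (Fin 4 → Fin 2) → ℚ} (ha : 0 ≤ a) :
    ∃ b, 0 ≤ b ∧ K4Mat.map (Int.cast : ℤ → ℚ) *ᵥ (b - a) = 0 ∧ AffinelySpans {x | b x = 0} := by
  obtain ⟨b, hb, hba, hmin⟩ := exists_nonneg_minimal_support
    (LinearMap.ker (K4Mat.map (Int.cast : ℤ → ℚ)).mulVecLin) ha
  refine ⟨b, hb, hba, fun h hh => affinelySpans_univ h fun x _ => ?_⟩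
  have hzero : (fun x => (parity x : ℚ) * affineForm h x) = 0 :=
    hmin _ (mulVec_parity_mul_affineForm h) fun x hx hbx => hx (by simp only [hh x hbx, mul_zero])
  exact (mul_eq_zero_iff_left (Int.cast_ne_zero.mpr (parity_ne_zero x))).mp (congrFun hzero x)

lemma exists_integral_vertex {y : K4Row → ℤ} (hZ : y ∈ Zspan) (hC : inCone y) :
    ∃ (w : (Fin 4 → Fin 2) → ℤ) (D : ℤ) (m : Fin 5 → ℤ), y = K4Mat *ᵥ w ∧ 0 < D ∧ D ≤ 3 ∧
      (∀ x, 0 ≤ D * w x + parity x * affineForm m x) ∧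
      AffinelySpans {x | D * w x + parity x * affineForm m x = 0} := by
  obtain ⟨w, rfl⟩ := hZ
  obtain ⟨a, ha, hwa⟩ := hC
  obtain ⟨b, hb, hba, hspan⟩ := exists_nonneg_affinelySpans_zeros ha
  have hbw : K4Mat.map (Int.cast : ℤ → ℚ) *ᵥ (b - fun x => (w x : ℚ)) = 0 := by
    have haw : K4Mat.map (Int.cast : ℤ → ℚ) *ᵥ a = K4Mat.map Int.cast *ᵥ fun x => (w x : ℚ) := by
      funext k
      have hk := hwa k
      simp only [mulVec, dotProduct, map_apply, Int.cast_sum, Int.cast_mul] at hk ⊢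
      rw [hk]
      exact Finset.sum_congr rfl fun _ _ => mul_comm _ _
    rwa [mulVec_sub, haw, ← mulVec_sub] at hba
  obtain ⟨c, hc⟩ := exists_affineForm_of_mulVec_eq_zero hbw
  have hb_eq : ∀ x, b x = w x + parity x * affineForm c x := fun x => by
    rw [← hc x, Pi.sub_apply, add_sub_cancel]
  obtain ⟨D, hD, hbound, m, hm⟩ := exists_common_denominator hspan (c := c) fun x hx =>
    ⟨-(parity x * w x), by
      have hsq : (parity x : ℚ) * parity x = 1 := mod_cast parity_mul_self x
      push_cast
      linear_combination -(parity x : ℚ) * (hx.symm.trans (hb_eq x)) - affineForm c x * hsq⟩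
  have hclear : ∀ x, ((D * w x + parity x * affineForm m x : ℤ) : ℚ) = D * b x := fun x => by
    have hDc : affineForm (fun j => (m j : ℚ)) x = D * affineForm c x := by
      rw [← funext hm]
      exact dotProduct_smul (D : ℚ) _ c
    rw [affineForm_intCast] at hDc
    rw [hb_eq, mul_add, mul_left_comm, ← hDc]
    push_cast
    rfl
  have hDpos : (0 : ℚ) < D := Int.cast_pos.mpr hD
  have hD3 : D ≤ 3 := by
    norm_num at hbound
    nlinarith
  refine ⟨w, D, m, rfl, hD, hD3, fun x => ?_, hspan.mono fun x hx => ?_⟩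
  · exact_mod_cast (hclear x).ge.trans' (mul_nonneg hDpos.le (hb x))
  · exact Int.cast_eq_zero.mp ((hclear x).trans (by rw [show b x = 0 from hx, mul_zero]))

lemma add_mem_Nspan {y z : K4Row → ℤ} (hy : y ∈ Nspan) (hz : z ∈ Nspan) : y + z ∈ Nspan := by
  obtain ⟨v, hv, rfl⟩ := hy
  obtain ⟨w, hw, rfl⟩ := hz
  exact ⟨v + w, add_nonneg hv hw, (mulVec_add _ _ _).symm⟩

lemma one_add_col (s : Fin 4 → Fin 2) : 1 + K4Mat.col s =
    K4Mat *ᵥ (fun x => if hammingDist x s = 1 ∨ hammingDist x s = 4 then 1 else 0) := by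
  revert s
  decide +kernel

lemma two_sub_col (s : Fin 4 → Fin 2) : 2 - K4Mat.col s =
    K4Mat *ᵥ (fun x => if parity x = parity s ∧ x ≠ s then 1 else 0) := by
  revert s
  decide +kernel

lemma one_add_col_mem_Nspan (s : Fin 4 → Fin 2) : 1 + K4Mat.col s ∈ Nspan :=
  ⟨_, fun _ => by dsimp only; split_ifs <;> simp, one_add_col s⟩

lemma two_sub_col_mem_Nspan (s : Fin 4 → Fin 2) : 2 - K4Mat.col s ∈ Nspan :=
  ⟨_, fun _ => by dsimp only; split_ifs <;> simp, two_sub_col s⟩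

lemma one_mem_Zspan : 1 ∈ Zspan := by
  obtain ⟨v, -, hv⟩ := one_add_col_mem_Nspan 0
  refine ⟨v - Pi.single 0 1, ?_⟩
  rw [mulVec_sub, ← hv, mulVec_single_one, add_sub_cancel_right]

lemma inCone_one : inCone 1 := by
  have hrow : ∀ k, ∑ x, K4Mat k x = 4 := by decide +kernel
  refine ⟨fun _ => 1 / 4, fun _ => by norm_num, fun k => ?_⟩
  rw [← Finset.mul_sum, ← Int.cast_sum, hrow]
  norm_num

lemma one_notMem_Nspan : 1 ∉ Nspan := by
  rintro ⟨w, hw, hone⟩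
  have hvanish : w = 0 := by
    funext s
    have hle : 18 * w s ≤ 12 := by
      have hsum : ∀ s, agreementWeight 3 (-1) 1 s ⬝ᵥ 1 = 12 := by decide +kernel
      have hnn : ∀ d : ℤ, 0 ≤ (d - 2) * (d - 3) := fun d => by
        rcases le_or_gt d 2 with h | h <;> nlinarith
      rw [← hsum s, hone, dotProduct_mulVec, dotProduct]
      simp only [agreementWeight_vecMul_quadratic]
      refine le_of_eq_of_le ?_ (Finset.single_le_sum (fun x _ =>
        mul_nonneg (mul_nonneg zero_le_three (hnn _)) (hw x)) (Finset.mem_univ s))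
      simp
    have hws : 0 ≤ w s := hw s
    exact show w s = 0 by omega
  rw [hvanish, mulVec_zero] at hone
  simpa using congrFun hone ⟨⟨(0, 1), by decide⟩, 0, 0⟩

lemma eq_one_of_eq_mulVec_add_one {y : K4Row → ℤ} (hy : y ∉ Nspan) {n : (Fin 4 → Fin 2) → ℤ}
    (hn : 0 ≤ n) (h : y = K4Mat *ᵥ n + 1) : y = 1 := by
  by_contra hne
  obtain ⟨s, hs⟩ : ∃ s, n s ≠ 0 := by
    by_contra! hzero
    exact hne (by rw [h, show n = 0 from funext hzero, mulVec_zero, zero_add])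
  have hsub : 0 ≤ n - Pi.single s 1 := fun x => by
    have hnx : 0 ≤ n x := hn x
    change 0 ≤ n x - (Pi.single s 1 : _ → ℤ) x
    rcases eq_or_ne x s with rfl | hxs
    · rw [Pi.single_eq_same]
      omega
    · rwa [Pi.single_eq_of_ne hxs, sub_zero]
  have hsplit : y = K4Mat *ᵥ (n - Pi.single s 1) + (1 + K4Mat.col s) := by
    rw [h, mulVec_sub, mulVec_single_one]
    abel
  exact hy (hsplit ▸ add_mem_Nspan ⟨_, hsub, rfl⟩ (one_add_col_mem_Nspan s))

lemma liesInHyperplaneMod_two_or_card (ε : Fin 5 → SignType) :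
    LiesInHyperplaneMod 2 ε ∨ 3 ≤ Finset.card {i : Fin 4 | ε i.succ ≠ 0} := by
  revert ε
  decide +kernel

lemma mulVec_emod_two {ε : Fin 5 → SignType} (hε : 3 ≤ Finset.card {i : Fin 4 | ε i.succ ≠ 0}) :
    K4Mat *ᵥ (fun x => parity x * affineForm (fun j => (ε j : ℤ)) x % 2) = 2 • 1 := by
  revert ε
  decide +kernel

lemma liesInHyperplaneMod_three_or_hammingDist (ε : Fin 5 → SignType) :
    LiesInHyperplaneMod 3 ε ∨ ∃ (s : Fin 4 → Fin 2) (η : ℤˣ), ∀ x,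
      affineForm (fun j => (ε j : ℤ)) x ≡ η * hammingDist x s [ZMOD 3] := by
  revert ε
  decide +kernel

lemma mulVec_emod_three (s : Fin 4 → Fin 2) (η : ℤˣ) :
    K4Mat *ᵥ (fun x => parity x * (η * hammingDist x s) % 3) =
      3 • if η * parity s = 1 then 2 - K4Mat.col (s + 1) else 1 := by
  revert s η
  decide +kernel

lemma mulVec_emod_two_of_affinelySpans {ε : Fin 5 → SignType} (hε : ε ≠ 0)
    (hspan : AffinelySpans {x | 2 ∣ affineForm (fun j => (ε j : ℤ)) x}) :
    K4Mat *ᵥ (fun x => parity x * affineForm (fun j => (ε j : ℤ)) x % 2) = 2 • 1 :=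
  mulVec_emod_two <| (liesInHyperplaneMod_two_or_card ε).resolve_left fun h =>
    h.not_affinelySpans le_rfl hε hspan

lemma exists_mulVec_emod_three_of_affinelySpans {ε : Fin 5 → SignType} (hε : ε ≠ 0)
    (hspan : AffinelySpans {x | 3 ∣ affineForm (fun j => (ε j : ℤ)) x}) :
    ∃ r : K4Row → ℤ, (r = 1 ∨ r ∈ Nspan) ∧
      K4Mat *ᵥ (fun x => parity x * affineForm (fun j => (ε j : ℤ)) x % 3) = 3 • r := by
  obtain h | ⟨s, η, hmod⟩ := liesInHyperplaneMod_three_or_hammingDist ε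
  · exact absurd hspan (h.not_affinelySpans (by norm_num) hε)
  · rw [show (fun x => parity x * affineForm (fun j => (ε j : ℤ)) x % 3) =
      fun x => parity x * (η * hammingDist x s) % 3 from
        funext fun x => (hmod x).mul_left (parity x), mulVec_emod_three]
    refine ⟨_, ?_, rfl⟩
    split_ifs
    · exact Or.inr (two_sub_col_mem_Nspan _)
    · exact Or.inl rfl

lemma exists_signType_modEq {D : ℤ} (hD : 0 < D) (hD3 : D ≤ 3) (z : ℤ) :
    ∃ ε : SignType, z ≡ ε [ZMOD D] := by
  obtain h | h | h : z ≡ 0 [ZMOD D] ∨ z ≡ 1 [ZMOD D] ∨ z ≡ -1 [ZMOD D] := by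
    simp only [Int.ModEq]
    interval_cases D <;> omega
  exacts [⟨0, by simpa using h⟩, ⟨1, by simpa using h⟩, ⟨-1, by simpa using h⟩]

lemma exists_mulVec_emod_of_affinelySpans {D : ℤ} (hD : 0 < D) (hD3 : D ≤ 3) {m : Fin 5 → ℤ}
    (hspan : AffinelySpans {x | D ∣ affineForm m x}) :
    ∃ r : K4Row → ℤ, (r = 1 ∨ r ∈ Nspan) ∧
      K4Mat *ᵥ (fun x => parity x * affineForm m x % D) = D • r := by
  choose ε hε using fun j => exists_signType_modEq hD hD3 (m j)
  have hmod := affineForm_modEq hε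
  simp only [(hmod _).dvd_iff] at hspan
  rw [show (fun x => parity x * affineForm m x % D) =
    fun x => parity x * affineForm (fun j => (ε j : ℤ)) x % D from
      funext fun x => (hmod x).mul_left (parity x)]
  rcases eq_or_ne ε 0 with rfl | hne
  · refine ⟨0, Or.inr ⟨0, le_rfl, (mulVec_zero _).symm⟩, ?_⟩
    simp [affineForm, dotProduct, ← Pi.zero_def]
  obtain rfl | rfl | rfl : D = 1 ∨ D = 2 ∨ D = 3 := by omega
  · refine ⟨0, Or.inr ⟨0, le_rfl, (mulVec_zero _).symm⟩, ?_⟩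
    simp [← Pi.zero_def]
  · exact ⟨1, Or.inl rfl, mulVec_emod_two_of_affinelySpans hne hspan⟩
  · exact exists_mulVec_emod_three_of_affinelySpans hne hspan

lemma exists_eq_mulVec_add {y : K4Row → ℤ} (hZ : y ∈ Zspan) (hC : inCone y) :
    ∃ n r, 0 ≤ n ∧ (r = 1 ∨ r ∈ Nspan) ∧ y = K4Mat *ᵥ n + r := by
  obtain ⟨w, D, m, rfl, hD, hD3, hnonneg, hspan⟩ := exists_integral_vertex hZ hC
  let e : (Fin 4 → Fin 2) → ℤ := fun x => parity x * affineForm m x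
  obtain ⟨r, hr, hrem⟩ := exists_mulVec_emod_of_affinelySpans hD hD3 (m := m) <|
    hspan.mono fun x hx => ⟨-(parity x * w x), by
      linear_combination parity x * hx.out - affineForm m x * parity_mul_self x⟩
  refine ⟨fun x => w x + e x / D, r, fun x => ?_, hr, ?_⟩
  · have hfloor : 0 ≤ (D * w x + e x) / D := Int.ediv_nonneg (hnonneg x) hD.le
    rwa [Int.mul_add_ediv_left _ _ hD.ne'] at hfloor
  · have he : K4Mat *ᵥ e = 0 := mulVec_parity_mul_affineForm m
    have hquot : D • (K4Mat *ᵥ fun x => e x / D) + D • r = 0 := by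
      rw [← he, ← hrem, ← mulVec_smul, ← mulVec_add]
      exact congrArg _ (funext fun x => Int.mul_ediv_add_emod (e x) D)
    rw [← smul_add] at hquot
    have hcancel := (smul_eq_zero_iff_right hD.ne').mp hquot
    rw [show (fun x => w x + e x / D) = w + fun x => e x / D from rfl, mulVec_add, add_assoc,
      hcancel, add_zero]

/-- Proposition 5.8: the binary hierarchical semigroup of `K₄` has
exactly one hole, the all-ones vector `𝟏` (all pair margins equal to one): `𝟏` lies
in the normalization `ℤℬ ∩ ℝ≥0ℬ` but not in `ℕℬ`, and every other element of the
normalization lies in the semigroup. -/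
theorem stmt_19 :
    ((fun _ => (1 : ℤ)) : K4Row → ℤ) ∈ Zspan ∧
    inCone (fun _ => (1 : ℤ)) ∧
    ((fun _ => (1 : ℤ)) : K4Row → ℤ) ∉ Nspan ∧
    ∀ y : K4Row → ℤ, y ∈ Zspan → inCone y → y ∉ Nspan →
      y = fun _ => (1 : ℤ) := by
  refine ⟨one_mem_Zspan, inCone_one, one_notMem_Nspan, fun y hZ hC hN => ?_⟩
  obtain ⟨n, r, hn, rfl | hr, hy⟩ := exists_eq_mulVec_add hZ hC
  · exact eq_one_of_eq_mulVec_add_one hN hn hy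
  · exact absurd (hy ▸ add_mem_Nspan ⟨n, hn, rfl⟩ hr) hN

end Stmt19
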